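/- Let r and n be positive integers, let O be any positive-dominant total order on C(r,n), and let n̄ = (n_0, n_1, …, n_k) be a composition of n. Then, as an identity of polynomials in the variables p and a with integer coefficients, Σ_{f ∈ N_0^{r,n}(n̄)} p^{inv_O(f)} a^{col(f)} = ∏_{i=n_0}^{n−1} (1 + Σ_{j=1}^{r−1} a^j p^{j+i}) · [n; n_0, n_1, …, n_k]_p. -/

import Mathlib

open scoped Classical

abbrev CI : Type := ℕ × ℕ

/-- Membership in the set `C(r,n)` of colored integers. -/
def memC (r n : ℕ) (x : CI) : Prop :=
  x.1 ≤ n ∧ x.2 < r ∧ (x.1 = 0 → x.2 = 0)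

/-- A positive-dominant (strict) total order on the colored integers `C(r,n)`. -/
structure PDOrder (r n : ℕ) where
  lt : CI → CI → Prop
  irrefl : ∀ x, memC r n x → ¬lt x x
  trans : ∀ x y z, memC r n x → memC r n y → memC r n z → lt x y → lt y z → lt x z
  trichotomy : ∀ x y, memC r n x → memC r n y → x = y ∨ lt x y ∨ lt y x
  nat_mono : ∀ i j : ℕ, i ≤ n → j ≤ n → i < j → lt (i, 0) (j, 0)
  pos_dom : ∀ i j c : ℕ, i ≤ n → 1 ≤ j → j ≤ n → 1 ≤ c → c < r → lt (j, c) (i, 0)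

/-- A colored permutation in `G(r,n) = Z_r ≀ S_n`. -/
structure ColoredPerm (r n : ℕ) where
  perm : Equiv.Perm (Fin n)
  color : Fin n → Fin r

/-- The colored entry `π(i)^{c_i}` (values are taken in `[1,n]`). -/
def cval {r n : ℕ} (γ : ColoredPerm r n) (i : Fin n) : CI :=
  ((γ.perm i : ℕ) + 1, (γ.color i : ℕ))

/-- Entry `γ(j)` for `j ∈ {0,…,n}`, with the convention `γ(0) = 0`. -/
def centry {r n : ℕ} (γ : ColoredPerm r n) (j : ℕ) : CI :=
  if h : 1 ≤ j ∧ j ≤ n then cval γ ⟨j - 1, by omega⟩ else (0, 0)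

/-- Descent set `Des(γ) ⊆ {0,…,n-1}` with respect to the relation `lt`. -/
noncomputable def DesSet {r n : ℕ} (lt : CI → CI → Prop) (γ : ColoredPerm r n) : Finset ℕ :=
  (Finset.range n).filter fun j => lt (centry γ (j + 1)) (centry γ j)

noncomputable def desStat {r n : ℕ} (lt : CI → CI → Prop) (γ : ColoredPerm r n) : ℕ :=
  (DesSet lt γ).card

noncomputable def majStat {r n : ℕ} (lt : CI → CI → Prop) (γ : ColoredPerm r n) : ℕ :=
  ∑ j ∈ DesSet lt γ, j

noncomputable def invStat {r n : ℕ} (lt : CI → CI → Prop) (γ : ColoredPerm r n) : ℕ :=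
  ((Finset.univ : Finset (Fin n × Fin n)).filter fun p =>
    p.1 < p.2 ∧ lt (cval γ p.2) (cval γ p.1)).card

noncomputable def lenStat {r n : ℕ} (lt : CI → CI → Prop) (γ : ColoredPerm r n) : ℕ :=
  invStat lt γ +
    ∑ i ∈ Finset.univ.filter (fun i => 0 < (γ.color i : ℕ)),
      ((γ.perm i : ℕ) + 1 + (γ.color i : ℕ) - 1)

def colStat {r n : ℕ} (γ : ColoredPerm r n) : ℕ := ∑ i, (γ.color i : ℕ)

/-- The inverse colored permutation `γ⁻¹`. -/
def cinv {r n : ℕ} (γ : ColoredPerm r n) : ColoredPerm r n :=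
  ⟨γ.perm⁻¹, fun i => γ.color (γ.perm⁻¹ i)⟩

/-- An element of `N_0^{r,n}`: a sequence of colored nonnegative integers. -/
structure ColoredSeq (r n : ℕ) where
  val : Fin n → ℕ
  col : Fin n → ℕ
  col_lt : ∀ i, col i < r
  zero_col : ∀ i, val i = 0 → col i = 0

/-- `γ` is the colored permutation `γ_O(f)` obtained by sorting the colored positions
`i^{cf_i}` by increasing value `f_i`, ties broken by increasing `lt`-order. -/
def isSorted {r n : ℕ} (lt : CI → CI → Prop) (f : ColoredSeq r n) (γ : ColoredPerm r n) : Prop :=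
  (∀ i, (γ.color i : ℕ) = f.col (γ.perm i)) ∧
    ∀ i j : Fin n, i < j →
      f.val (γ.perm i) < f.val (γ.perm j) ∨
        (f.val (γ.perm i) = f.val (γ.perm j) ∧ lt (cval γ i) (cval γ j))

def maxf {r n : ℕ} (f : ColoredSeq r n) : ℕ := Finset.univ.sup f.val
def sumf {r n : ℕ} (f : ColoredSeq r n) : ℕ := ∑ i, f.val i
def colf {r n : ℕ} (f : ColoredSeq r n) : ℕ := ∑ i, f.col i

def NSet (r n k : ℕ) (nv : ℕ → ℕ) : Set (ColoredSeq r n) :=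
  {f | ∀ j ≤ k, (Finset.univ.filter fun i => f.val i = j).card = nv j}


-- Statement 4
noncomputable def qintP (m : ℕ) : MvPolynomial (Fin 2) ℤ :=
  ∑ i ∈ Finset.range m, MvPolynomial.X 0 ^ i

noncomputable def qfactP (m : ℕ) : MvPolynomial (Fin 2) ℤ :=
  ∏ i ∈ Finset.range m, qintP (i + 1)


abbrev RR := MvPolynomial (Fin 2) ℤ
noncomputable abbrev PP : RR := MvPolynomial.X 0
noncomputable abbrev AA : RR := MvPolynomial.X 1

lemma qint_add (a b : ℕ) : qintP (a + b) = qintP a + PP ^ a * qintP b := by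
  unfold qintP
  rw [Finset.sum_range_add, Finset.mul_sum]
  simp [pow_add]

lemma qint_zero : qintP 0 = 0 := by simp [qintP]

lemma qint_ne (m : ℕ) : qintP (m + 1) ≠ 0 := by
  intro h
  have := congrArg (MvPolynomial.eval (fun _ => (1 : ℤ))) h
  simp [qintP] at this
  omega

lemma qfact_succ (m : ℕ) : qfactP (m + 1) = qfactP m * qintP (m + 1) := by
  simp [qfactP, Finset.prod_range_succ]

lemma qfact_zero : qfactP 0 = 1 := by simp [qfactP]

lemma qfact_ne (m : ℕ) : qfactP m ≠ 0 := by
  unfold qfactP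
  exact Finset.prod_ne_zero_iff.mpr fun i _ => qint_ne i

noncomputable def qfall (m s : ℕ) : RR := ∏ t ∈ Finset.range s, qintP (m - t)

lemma qfall_succ (m s : ℕ) : qfall m (s + 1) = qfall m s * qintP (m - s) := by
  simp [qfall, Finset.prod_range_succ]

lemma qfall_succ' (m s : ℕ) : qfall (m + 1) (s + 1) = qintP (m + 1) * qfall m s := by
  simp [qfall, Finset.prod_range_succ', mul_comm]

lemma qfall_big (m s : ℕ) (h : m < s) : qfall m s = 0 := by
  unfold qfall
  apply Finset.prod_eq_zero (Finset.mem_range.mpr h)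
  simp [qint_zero]

lemma qfall_fact (n s : ℕ) (h : s ≤ n) : qfall n s * qfactP (n - s) = qfactP n := by
  induction s with
  | zero => simp [qfall]
  | succ s ih =>
    rw [← ih (by omega), qfall_succ]
    obtain ⟨m, hm⟩ : ∃ m, n - s = m + 1 := ⟨n - s - 1, by omega⟩
    have : n - (s + 1) = m := by omega
    rw [this, hm, qfact_succ]; ring

noncomputable def ee : ℕ → ℕ → RR
  | _, 0 => 1
  | 0, _ + 1 => 0
  | n + 1, s + 1 => ee n (s + 1) + PP ^ n * ee n s

lemma ee_zero (n : ℕ) : ee n 0 = 1 := by cases n <;> simp [ee]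

lemma ee_big (n s : ℕ) (h : n < s) : ee n s = 0 := by
  induction n generalizing s with
  | zero => cases s with
    | zero => omega
    | succ s => simp [ee]
  | succ n ih => cases s with
    | zero => omega
    | succ s => simp [ee, ih (s + 1) (by omega), ih s (by omega)]

lemma ee_fact (n s : ℕ) : ee n s * qfactP s = PP ^ (∑ t ∈ Finset.range s, t) * qfall n s := by
  induction n generalizing s with
  | zero => cases s with
    | zero => simp [ee, qfactP, qfall]
    | succ s => simp [ee, qfall_big]
  | succ n ih => cases s with
    | zero => simp [ee, qfactP, qfall]
    | succ s =>
      have h1 := ih (s + 1)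
      have h2 := ih s
      simp only [ee]
      rw [add_mul, h1, qfall_succ', qfact_succ, qfall_succ, Finset.sum_range_succ, pow_add]
      rcases le_or_gt s n with h | h
      · obtain ⟨d, rfl⟩ := Nat.exists_eq_add_of_le h
        have e1 : s + d + 1 = d + (s + 1) := by omega
        have e2 : s + d - s = d := by omega
        rw [e1, qint_add d (s + 1), e2, pow_add]
        linear_combination (PP ^ s * PP ^ d * qintP (s + 1)) * h2
      · rw [qfall_big n s h] at h2 ⊢
        linear_combination (PP ^ n * qintP (s + 1)) * h2

/-- The functional identity with recursion. -/
lemma ee_sum_succ (n : ℕ) (x : RR) (h : ℕ → RR) :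
    ∑ s ∈ Finset.range (n + 2), ee (n + 1) s * x ^ s * h s =
      ∑ s ∈ Finset.range (n + 1), ee n s * x ^ s * h s +
      PP ^ n * x * ∑ s ∈ Finset.range (n + 1), ee n s * x ^ s * h (s + 1) := by
  rw [Finset.sum_range_succ']
  have : ∑ s ∈ Finset.range (n + 1), ee n s * x ^ s * h s =
      ∑ s ∈ Finset.range (n + 1), ee n (s + 1) * x ^ (s + 1) * h (s + 1) + h 0 := by
    rw [Finset.sum_range_succ' (n := n), Finset.sum_range_succ (n := n) (f := fun s => ee n (s + 1) * x ^ (s + 1) * h (s + 1)), ee_big n (n + 1) (by omega)]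
    simp [ee_zero]
  rw [this, Finset.mul_sum]
  simp only [ee, add_mul, Finset.sum_add_distrib]
  have : ∀ s, PP ^ n * ee n s * x ^ (s + 1) * h (s + 1) =
    PP ^ n * x * (ee n s * x ^ s * h (s + 1)) := by intro s; ring
  simp only [this]
  ring

lemma ee_prod (m : ℕ) (x : RR) :
    ∏ i ∈ Finset.range m, (1 + x * PP ^ i) = ∑ s ∈ Finset.range (m + 1), ee m s * x ^ s := by
  induction m with
  | zero => simp [ee]
  | succ m ih =>
    have := ee_sum_succ m x (fun _ => 1)
    simp only [mul_one] at this
    rw [this, Finset.prod_range_succ, ih]; ring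

lemma algebra_final (n m : ℕ) (hm : m ≤ n) (U : RR) :
    ∑ s ∈ Finset.range (n + 1), ee n s * U ^ s * (PP ^ (s * m) * qfall (n - m) s * qfactP (n - s)) =
      (∏ i ∈ Finset.Ico m n, (1 + U * PP ^ i)) * qfactP n := by
  have h1 : ∏ i ∈ Finset.Ico m n, (1 + U * PP ^ i) =
      ∏ i ∈ Finset.range (n - m), (1 + (U * PP ^ m) * PP ^ i) := by
    rw [Finset.prod_Ico_eq_prod_range]
    simp [pow_add, mul_assoc]
  have h2 : ∑ s ∈ Finset.range (n - m + 1), ee (n - m) s * (U * PP ^ m) ^ s =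
      ∑ s ∈ Finset.range (n + 1), ee (n - m) s * (U * PP ^ m) ^ s := by
    apply Finset.sum_subset
    · intro s; simp; omega
    · intro s _ hs
      rw [ee_big]; · simp
      simp at hs; omega
  rw [h1, ee_prod, h2, Finset.sum_mul]
  apply Finset.sum_congr rfl
  intro s hs
  have hs : s ≤ n := by simp at hs; omega
  apply mul_right_cancel₀ (qfact_ne s)
  have a := ee_fact n s
  have b := ee_fact (n - m) s
  have c := qfall_fact n s hs
  have e : PP ^ (s * m) = (PP ^ m) ^ s := by rw [← pow_mul, mul_comm]
  rw [e, mul_pow]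
  linear_combination (U ^ s * (PP ^ m) ^ s * qfall (n - m) s * qfactP (n - s)) * a
    - (U ^ s * (PP ^ m) ^ s * qfactP n) * b
    + (PP ^ (∑ t ∈ Finset.range s, t) * U ^ s * (PP ^ m) ^ s * qfall (n - m) s) * c

lemma color_sum (r n : ℕ) (hr : 0 < r) (h : ℕ → RR) :
    ∑ κ : Fin n → Fin r, (∏ x, (if (κ x : ℕ) = 0 then 1 else AA ^ (κ x : ℕ) * PP ^ ((x : ℕ) + κ x))) *
      h (∑ x, if (κ x : ℕ) = 0 then 0 else 1) =
    ∑ s ∈ Finset.range (n + 1), ee n s * (∑ j ∈ Finset.Icc 1 (r - 1), AA ^ j * PP ^ j) ^ s * h s := by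
  induction n generalizing h with
  | zero => simp [ee]
  | succ n ih =>
    rw [ee_sum_succ, ← ih h, ← ih (fun s => h (s + 1))]
    rw [← (Fin.snocEquiv (fun _ => Fin r)).sum_comp, Fintype.sum_prod_type]
    simp only [Fin.snocEquiv, Equiv.coe_fn_mk, Fin.prod_univ_castSucc, Fin.sum_univ_castSucc (n := n), Fin.snoc_castSucc, Fin.snoc_last, Fin.val_castSucc, Fin.val_last]
    obtain ⟨q, rfl⟩ : ∃ q, r = q + 1 := ⟨r - 1, by omega⟩
    rw [Fin.sum_univ_succ]
    simp only [Fin.val_zero, Fin.val_succ, if_true, mul_one, add_zero, Nat.succ_ne_zero, if_false]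
    congr 1
    have : ∑ j ∈ Finset.Icc 1 (q + 1 - 1), AA ^ j * PP ^ j = ∑ c : Fin q, AA ^ ((c : ℕ) + 1) * PP ^ ((c:ℕ) + 1) := by
      rw [Fin.sum_univ_eq_sum_range (fun c => AA ^ (c + 1) * PP ^ (c + 1))]
      rw [Finset.range_eq_Ico, Finset.sum_Ico_add' (fun c => AA ^ c * PP ^ c)]
      rfl
    rw [this, mul_assoc, Finset.sum_mul, Finset.mul_sum]
    apply Finset.sum_congr rfl
    intro c _
    rw [Finset.mul_sum, Finset.mul_sum]
    apply Finset.sum_congr rfl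
    intro κ _
    rw [pow_add PP n]
    ring

def cnt {n K : ℕ} (w : Fin n → Fin K) (j : ℕ) : ℕ := ∑ i, if (w i : ℕ) = j then 1 else 0

def winv {n K : ℕ} (w : Fin n → Fin K) : ℕ := ∑ i, ∑ j, if i < j ∧ w j < w i then 1 else 0

def goodw {n K : ℕ} (s : ℕ) (nv : ℕ → ℕ) (w : Fin n → Fin K) : Prop :=
  (∀ j < K, cnt w j = nv j) ∧ ∀ i : Fin n, (i : ℕ) < s → (w i : ℕ) ≠ 0

lemma cnt_cons {n K : ℕ} (j : Fin K) (w : Fin n → Fin K) (t : ℕ) :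
    cnt (Fin.cons j w : Fin (n + 1) → Fin K) t = (if (j : ℕ) = t then 1 else 0) + cnt w t := by
  simp only [cnt, Fin.sum_univ_succ, Fin.cons_zero, Fin.cons_succ]

lemma winv_cons {n K : ℕ} (j : Fin K) (w : Fin n → Fin K) :
    winv (Fin.cons j w : Fin (n + 1) → Fin K) = (∑ t ∈ Finset.range j, cnt w t) + winv w := by
  have : ∑ t ∈ Finset.range j, cnt w t = ∑ i, if w i < j then 1 else 0 := by
    unfold cnt
    rw [Finset.sum_comm]
    apply Finset.sum_congr rfl
    intro i _
    rw [Finset.sum_ite_eq]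
    simp
  rw [this]
  simp only [winv, Fin.sum_univ_succ, Fin.cons_zero, Fin.cons_succ, Fin.succ_pos,
    Fin.succ_lt_succ_iff, Fin.not_lt_zero, true_and, false_and, if_false, zero_add]

lemma goodw_cons {n K : ℕ} (s : ℕ) (nv : ℕ → ℕ) (j : Fin K) (w : Fin n → Fin K)
    (h : ¬ (s ≠ 0 ∧ (j : ℕ) = 0)) (hj : nv j ≠ 0) :
    goodw s nv (Fin.cons j w : Fin (n + 1) → Fin K) ↔
      goodw (s - 1) (Function.update nv j (nv j - 1)) w := by
  unfold goodw
  simp only [cnt_cons, Fin.forall_fin_succ, Fin.cons_zero, Fin.cons_succ, Fin.val_zero, Fin.val_succ]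
  refine and_congr ?_ ?_
  · refine forall₂_congr fun t ht => ?_
    by_cases e : (j : ℕ) = t
    · subst e; simp; omega
    · have : t ≠ (j : ℕ) := fun h => e h.symm
      simp [e, this]
  · constructor
    · rintro ⟨_, h2⟩ i hi
      exact h2 i (by omega)
    · intro h2
      refine ⟨fun hs h0 => h ⟨by omega, h0⟩, fun i hi => h2 i (by omega)⟩

lemma sum_qint (nv : ℕ → ℕ) (m : ℕ) :
    ∑ j ∈ Finset.range m, PP ^ (∑ t ∈ Finset.range j, nv t) * qintP (nv j) =
      qintP (∑ t ∈ Finset.range m, nv t) := by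
  induction m with
  | zero => simp [qint_zero]
  | succ m ih => rw [Finset.sum_range_succ, ih, Finset.sum_range_succ, qint_add]

lemma word_lemma (K : ℕ) (n s : ℕ) (nv : ℕ → ℕ) (hs : s ≤ n)
    (hnv : ∑ j ∈ Finset.range (K + 1), nv j = n) :
    (∑ w : Fin n → Fin (K + 1), if goodw s nv w then PP ^ winv w else 0) *
      ∏ j ∈ Finset.range (K + 1), qfactP (nv j) =
    PP ^ (s * nv 0) * qfall (n - nv 0) s * qfactP (n - s) := by
  induction n generalizing s nv with
  | zero =>
    have hs : s = 0 := by omega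
    subst hs
    have h0 : ∀ j < K + 1, nv j = 0 := by
      intro j hj
      have := Finset.sum_eq_zero_iff.mp hnv j (Finset.mem_range.mpr hj)
      exact this
    have : ∏ j ∈ Finset.range (K + 1), qfactP (nv j) = 1 := by
      apply Finset.prod_eq_one
      intro j hj
      rw [h0 j (Finset.mem_range.mp hj), qfact_zero]
    rw [this]
    have hg : ∀ w : Fin 0 → Fin (K + 1), goodw 0 nv w := by
      intro w
      refine ⟨fun j hj => ?_, fun i => i.elim0⟩
      simp [cnt, h0 j hj]
    simp [hg, winv, qfall, qfact_zero]
  | succ n ih =>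
    rw [← (Fin.consEquiv (fun _ => Fin (K + 1))).sum_comp, Fintype.sum_prod_type, Finset.sum_mul]
    have key : ∀ j : Fin (K + 1),
        (∑ w : Fin n → Fin (K + 1), if goodw s nv (Fin.cons j w : Fin (n + 1) → Fin (K + 1)) then
          PP ^ winv (Fin.cons j w : Fin (n + 1) → Fin (K + 1)) else 0) *
          ∏ j ∈ Finset.range (K + 1), qfactP (nv j) =
        if s ≠ 0 ∧ (j : ℕ) = 0 then 0 else
          PP ^ (∑ t ∈ Finset.range j, nv t) * qintP (nv j) *
            (PP ^ ((s - 1) * nv 0) * qfall (n - nv 0) (s - 1) * qfactP (n - (s - 1))) := by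
      intro j
      split_ifs with hc
      · have : ∀ w : Fin n → Fin (K + 1),
            ¬ goodw s nv (Fin.cons j w : Fin (n + 1) → Fin (K + 1)) := by
          intro w hw
          have := hw.2 0 (by simp; omega)
          simp at this
          apply this
          ext
          simpa using hc.2
        simp [this]
      · by_cases hj : nv j = 0
        · have : ∀ w : Fin n → Fin (K + 1),
              ¬ goodw s nv (Fin.cons j w : Fin (n + 1) → Fin (K + 1)) := by
            intro w hw
            have := hw.1 j j.2
            rw [cnt_cons, hj] at this
            simp at this
          simp [this, hj, qint_zero]
        · have hjm : (j : ℕ) ∈ Finset.range (K + 1) := Finset.mem_range.mpr j.2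
          set nv' := Function.update nv j (nv j - 1) with hnv'
          have hne : ∀ t, t ≠ (j : ℕ) → nv' t = nv t := fun t ht => by simp [hnv', ht]
          have heq : nv' j = nv j - 1 := by simp [hnv']
          have hsum : ∑ t ∈ Finset.range (K + 1), nv' t = n := by
            have a1 := Finset.add_sum_erase (Finset.range (K + 1)) nv hjm
            have a2 := Finset.add_sum_erase (Finset.range (K + 1)) nv' hjm
            rw [Finset.sum_congr rfl (fun t ht => hne t (Finset.ne_of_mem_erase ht)), heq] at a2
            rw [hnv] at a1
            rw [← a2]
            have a3 : nv j - 1 + 1 = nv j := by omega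
            rw [← a3] at a1
            apply Nat.add_right_cancel (m := 1)
            rw [← a1]
            ring
          have hprod : ∏ t ∈ Finset.range (K + 1), qfactP (nv t) =
              (∏ t ∈ Finset.range (K + 1), qfactP (nv' t)) * qintP (nv j) := by
            rw [← Finset.mul_prod_erase _ _ hjm, ← Finset.mul_prod_erase _ (fun t => qfactP (nv' t)) hjm]
            rw [Finset.prod_congr rfl (fun t ht => by rw [hne t (Finset.ne_of_mem_erase ht)] :
              ∀ t ∈ (Finset.range (K + 1)).erase (j : ℕ), qfactP (nv' t) = qfactP (nv t)), heq]
            obtain ⟨m, hm⟩ := Nat.exists_eq_succ_of_ne_zero hj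
            rw [hm, qfact_succ]
            simp only [Nat.succ_eq_add_one, Nat.add_sub_cancel]
            ring
          have hw : ∀ w : Fin n → Fin (K + 1),
              (if goodw s nv (Fin.cons j w : Fin (n + 1) → Fin (K + 1)) then
                PP ^ winv (Fin.cons j w : Fin (n + 1) → Fin (K + 1)) else 0) =
              PP ^ (∑ t ∈ Finset.range j, nv t) *
                (if goodw (s - 1) nv' w then PP ^ winv w else 0) := by
            intro w
            simp only [goodw_cons s nv j w hc hj, ← hnv']
            split_ifs with hg
            · rw [winv_cons, pow_add]
              congr 2
              apply Finset.sum_congr rfl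
              intro t ht
              have ht := Finset.mem_range.mp ht
              rw [hg.1 t (by omega), hne t (by omega)]
            · simp
          have hi := ih (s - 1) nv' (by omega) hsum
          have h0 : PP ^ ((s - 1) * nv' 0) * qfall (n - nv' 0) (s - 1) =
              PP ^ ((s - 1) * nv 0) * qfall (n - nv 0) (s - 1) := by
            by_cases hz : s = 0
            · subst hz; simp [qfall]
            · rw [hne 0 (fun h => hc ⟨hz, h.symm⟩)]
          rw [Finset.sum_congr rfl (fun w _ => hw w), ← Finset.mul_sum, hprod, ← h0]
          linear_combination (PP ^ (∑ t ∈ Finset.range j, nv t) * qintP (nv j)) * hi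
    have hq := sum_qint nv (K + 1)
    rw [hnv] at hq
    refine (Finset.sum_congr rfl (fun j _ => key j)).trans ?_
    rw [Fin.sum_univ_eq_sum_range (fun j => if s ≠ 0 ∧ j = 0 then 0 else
          PP ^ (∑ t ∈ Finset.range j, nv t) * qintP (nv j) *
            (PP ^ ((s - 1) * nv 0) * qfall (n - nv 0) (s - 1) * qfactP (n - (s - 1))))]
    cases s with
    | zero =>
      simp only [ne_eq, not_true_eq_false, false_and, if_false]
      rw [← Finset.sum_mul, hq]
      simp [qfall, qfact_succ, mul_comm]
    | succ s =>
      rw [Finset.sum_range_succ'] at hq ⊢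
      simp only [Nat.succ_ne_zero, ne_eq, not_false_eq_true, true_and, if_true, if_false, add_zero,
        and_false, Nat.add_sub_cancel, Finset.range_zero, Finset.sum_empty, pow_zero, one_mul] at hq ⊢
      rw [← Finset.sum_mul]
      have hle : nv 0 ≤ n + 1 := by
        rw [← hnv]
        exact Finset.single_le_sum (f := nv) (fun _ _ => Nat.zero_le _) (Finset.mem_range.mpr (by omega))
      have hq2 := qint_add (nv 0) (n + 1 - nv 0)
      rw [Nat.add_sub_cancel' hle, ← hq] at hq2
      have hq3 : ∑ j ∈ Finset.range K, PP ^ (∑ t ∈ Finset.range (j + 1), nv t) * qintP (nv (j + 1)) =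
        PP ^ nv 0 * qintP (n + 1 - nv 0) := by linear_combination hq2
      rw [hq3, Nat.add_sub_add_right, add_mul, pow_add, one_mul]
      rcases Nat.lt_or_ge n (nv 0) with h | h
      · have : n + 1 - nv 0 = 0 := by omega
        rw [this, qint_zero, qfall_big 0 _ (by omega)]; ring
      · have : n + 1 - nv 0 = (n - nv 0) + 1 := by omega
        rw [this, qfall_succ']; ring

lemma lt_asymm_pd {r n : ℕ} (O : PDOrder r n) (x y : CI) (hx : memC r n x) (hy : memC r n y)
    (h : O.lt x y) : ¬ O.lt y x := fun h' => O.irrefl x hx (O.trans x y x hx hy hx h h')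

lemma memC_pos {r n : ℕ} (x : Fin n) (c : ℕ) (hc : c < r) : memC r n ((x : ℕ) + 1, c) :=
  ⟨x.2, hc, by simp⟩

lemma len_eq {r n K : ℕ} (O : PDOrder r n) (f : ColoredSeq r n) (γ : ColoredPerm r n)
    (hγ : isSorted O.lt f γ) (e : Equiv.Perm (Fin n))
    (he : ∀ i j, i < j → O.lt ((e i : ℕ) + 1, f.col (e i)) ((e j : ℕ) + 1, f.col (e j)))
    (w : Fin n → Fin K) (hw : ∀ i, (w i : ℕ) = f.val i) :
    lenStat O.lt γ = winv (w ∘ e) + ∑ x, if f.col x = 0 then 0 else (x : ℕ) + f.col x := by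
  obtain ⟨hc, hs⟩ := hγ
  have mem : ∀ x : Fin n, memC r n ((x : ℕ) + 1, f.col x) := fun x => memC_pos x _ (f.col_lt x)
  have cv : ∀ i, cval γ i = ((γ.perm i : ℕ) + 1, f.col (γ.perm i)) := by
    intro i; simp [cval, hc]
  have asym : ∀ x y : Fin n, O.lt ((x : ℕ) + 1, f.col x) ((y : ℕ) + 1, f.col y) →
      ¬ O.lt ((y : ℕ) + 1, f.col y) ((x : ℕ) + 1, f.col x) :=
    fun x y => lt_asymm_pd O _ _ (mem x) (mem y)
  simp only [cv] at hs
  unfold lenStat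
  congr 1
  · unfold invStat
    rw [Finset.card_filter, Fintype.sum_prod_type]
    let Q : Fin n → Fin n → ℕ := fun x y =>
      if O.lt ((y : ℕ) + 1, f.col y) ((x : ℕ) + 1, f.col x) ∧ f.val x < f.val y then 1 else 0
    have h1 : ∀ i j : Fin n, (if i < j ∧ O.lt (cval γ j) (cval γ i) then 1 else 0) =
        Q (γ.perm i) (γ.perm j) := by
      intro i j
      simp only [Q, cv]
      congr 1
      apply propext
      constructor
      · rintro ⟨hij, h⟩
        refine ⟨h, ?_⟩
        rcases hs i j hij with h2 | h2
        · exact h2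
        · exact absurd h2.2 (asym _ _ h)
      · rintro ⟨h, h2⟩
        refine ⟨?_, h⟩
        rcases lt_trichotomy i j with h3 | h3 | h3
        · exact h3
        · subst h3; omega
        · rcases hs j i h3 with h4 | h4 <;> omega
    have h2 : ∀ i j : Fin n, (if i < j ∧ (w ∘ e) j < (w ∘ e) i then 1 else 0) =
        Q (e j) (e i) := by
      intro i j
      simp only [Q, Function.comp, Fin.lt_def (a := w _), hw]
      congr 1
      apply propext
      refine and_congr_left fun _ => ⟨he i j, fun h => ?_⟩
      rcases lt_trichotomy i j with h3 | h3 | h3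
      · exact h3
      · subst h3; exact absurd h (asym _ _ h)
      · exact absurd h (asym _ _ (he j i h3))
    unfold winv
    simp only [h1, h2]
    rw [Finset.sum_comm (f := fun i j => Q (e j) (e i))]
    trans ∑ x, ∑ y, Q x y
    · rw [← Equiv.sum_comp γ.perm (fun x => ∑ y, Q x y)]
      exact Finset.sum_congr rfl fun i _ => Equiv.sum_comp γ.perm (fun y => Q (γ.perm i) y)
    · rw [← Equiv.sum_comp e (fun x => ∑ y, Q x y)]
      exact Finset.sum_congr rfl fun i _ => (Equiv.sum_comp e (fun y => Q (e i) y)).symm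
  · rw [Finset.sum_filter, ← Equiv.sum_comp γ.perm (fun x => if f.col x = 0 then 0 else (x : ℕ) + f.col x)]
    apply Finset.sum_congr rfl
    intro i _
    rw [hc]
    by_cases h : f.col (γ.perm i) = 0
    · simp [h]
    · simp only [h, if_false, Nat.pos_of_ne_zero h, if_true]; omega

def okpair {r n : ℕ} (k : ℕ) (nv : ℕ → ℕ) (κ : Fin n → Fin r) (w : Fin n → Fin (k + 1)) : Prop :=
  (∀ j < k + 1, cnt w j = nv j) ∧ ∀ x, (κ x : ℕ) ≠ 0 → (w x : ℕ) ≠ 0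

lemma lower_card {n : ℕ} (D : Fin n → Prop) [DecidablePred D] (hD : ∀ i j, i < j → D j → D i) (i : Fin n) :
    D i ↔ (i : ℕ) < ∑ x, if D x then 1 else 0 := by
  have hcard : (∑ x, if D x then 1 else 0) = (Finset.univ.filter D).card :=
    (Finset.card_filter _ _).symm
  rw [hcard]
  constructor
  · intro h
    have : Finset.Iic i ⊆ Finset.univ.filter D := by
      intro j hj
      simp only [Finset.mem_filter, Finset.mem_univ, true_and]
      rcases (Finset.mem_Iic.mp hj).lt_or_eq with h2 | h2
      · exact hD _ _ h2 h
      · rwa [h2]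
    have := Finset.card_le_card this
    rw [Fin.card_Iic] at this
    omega
  · intro h
    by_contra hn
    have : Finset.univ.filter D ⊆ Finset.Iio i := by
      intro j hj
      simp only [Finset.mem_filter, Finset.mem_univ, true_and] at hj
      rw [Finset.mem_Iio]
      rcases lt_trichotomy i j with h3 | h3 | h3
      · exact absurd (hD _ _ h3 hj) hn
      · subst h3; exact absurd hj hn
      · exact h3
    have := Finset.card_le_card this
    rw [Fin.card_Iio] at this
    omega

lemma fixed_color {r n k : ℕ} (O : PDOrder r n) (nv : ℕ → ℕ)
    (hcomp : ∑ j ∈ Finset.range (k + 1), nv j = n) (κ : Fin n → Fin r) (e : Equiv.Perm (Fin n))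
    (he : ∀ i j, i < j → O.lt ((e i : ℕ) + 1, (κ (e i) : ℕ)) ((e j : ℕ) + 1, (κ (e j) : ℕ)))
    (s : ℕ) (hs : s = ∑ x, if (κ x : ℕ) = 0 then 0 else 1) :
    (∑ w : Fin n → Fin (k + 1), if okpair k nv κ w then PP ^ winv (w ∘ e) else 0) *
      ∏ j ∈ Finset.range (k + 1), qfactP (nv j) =
    PP ^ (s * nv 0) * qfall (n - nv 0) s * qfactP (n - s) := by
  have hsn : s ≤ n := by
    rw [hs]
    calc _ ≤ ∑ x : Fin n, 1 := Finset.sum_le_sum fun x _ => by split_ifs <;> omega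
      _ = n := by simp
  rw [← word_lemma k n s nv hsn hcomp]
  congr 1
  rw [← Equiv.sum_comp (Equiv.arrowCongr e.symm (Equiv.refl (Fin (k + 1))))
    (fun w => if goodw s nv w then PP ^ winv w else 0)]
  apply Finset.sum_congr rfl
  intro w _
  have hE : (Equiv.arrowCongr e.symm (Equiv.refl (Fin (k + 1)))) w = w ∘ e := by
    ext i; simp [Equiv.arrowCongr]
  rw [hE]
  have low := lower_card (fun i => (κ (e i) : ℕ) ≠ 0) (by
    intro i j hij hj hi
    have h1 := he i j hij
    rw [hi] at h1
    have h2 := O.pos_dom ((e i : ℕ) + 1) ((e j : ℕ) + 1) (κ (e j)) (by omega) (by omega) (by omega)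
      (Nat.pos_of_ne_zero hj) (κ (e j)).2
    exact lt_asymm_pd O _ _ (memC_pos _ _ (by have := (κ (e j)).2; omega)) (memC_pos _ _ (κ (e j)).2) h1 h2)
  have hs2 : (∑ x, if (κ (e x) : ℕ) ≠ 0 then 1 else 0) = s := by
    rw [hs, ← Equiv.sum_comp e (fun x => if (κ x : ℕ) = 0 then 0 else 1)]
    apply Finset.sum_congr rfl
    intro x _
    by_cases h : (κ (e x) : ℕ) = 0 <;> simp [h]
  rw [hs2] at low
  have hiff : okpair k nv κ w ↔ goodw s nv (w ∘ e) := by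
    unfold okpair goodw
    refine and_congr ?_ ?_
    · refine forall₂_congr fun j _ => ?_
      have : cnt (w ∘ e) j = cnt w j := Equiv.sum_comp e (fun i => if (w i : ℕ) = j then 1 else 0)
      rw [this]
    · rw [← e.forall_congr_right]
      exact forall_congr' fun i => by rw [low i]; rfl
  simp only [hiff]

def toSeq {r n k : ℕ} (q : (Fin n → Fin r) × (Fin n → Fin (k + 1))) : ColoredSeq r n where
  val i := q.2 i
  col i := if (q.2 i : ℕ) = 0 then 0 else q.1 i
  col_lt i := by
    have := (q.1 i).2
    split_ifs <;> omega
  zero_col i h := by simp only [h, if_true]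

lemma toSeq_col {r n k : ℕ} (nv : ℕ → ℕ) (q : (Fin n → Fin r) × (Fin n → Fin (k + 1)))
    (h : okpair k nv q.1 q.2) (i : Fin n) : (toSeq q).col i = q.1 i := by
  simp only [toSeq]
  split_ifs with h0
  · by_contra h1
    exact h.2 i (fun h => h1 h.symm) h0
  · rfl

noncomputable def okset (r n k : ℕ) (nv : ℕ → ℕ) :
    Finset ((Fin n → Fin r) × (Fin n → Fin (k + 1))) :=
  Finset.univ.filter fun q => okpair k nv q.1 q.2

lemma NSet_eq {r n k : ℕ} (nv : ℕ → ℕ) (hcomp : ∑ j ∈ Finset.range (k + 1), nv j = n) :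
    NSet r n k nv = Set.image toSeq (okset r n k nv : Set ((Fin n → Fin r) × (Fin n → Fin (k + 1)))) := by
  ext f
  simp only [NSet, Set.mem_ofPred_eq, Set.mem_image, okset, Finset.coe_filter, Finset.mem_univ, true_and]
  constructor
  · intro hf
    have hle : ∀ i, f.val i < k + 1 := by
      have h1 : ∑ j ∈ Finset.range (k + 1), ∑ i, (if f.val i = j then 1 else 0) = n := by
        refine Eq.trans ?_ hcomp
        apply Finset.sum_congr rfl
        intro j hj
        rw [← hf j (by simp at hj; omega), Finset.card_filter]
      rw [Finset.sum_comm] at h1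
      simp only [Finset.sum_ite_eq, Finset.mem_range] at h1
      rw [← Finset.card_filter] at h1
      have h2 : Finset.univ.filter (fun i => f.val i < k + 1) = Finset.univ := by
        apply Finset.eq_univ_of_card
        rw [h1]; simp
      intro i
      have := Finset.mem_univ i
      rw [← h2] at this
      simpa using this
    refine ⟨(fun i => ⟨f.col i, f.col_lt i⟩, fun i => ⟨f.val i, hle i⟩), ⟨?_, ?_⟩, ?_⟩
    · intro j hj
      rw [← hf j (by omega), Finset.card_filter]
      rfl
    · intro x h1 h2
      exact h1 (f.zero_col x h2)
    · cases f with
      | mk v c hc hz =>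
        simp only [toSeq, ColoredSeq.mk.injEq, true_and]
        ext i
        split_ifs with h
        · exact (hz i h).symm
        · rfl
  · rintro ⟨q, hq, rfl⟩ j hj
    rw [← hq.1 j (by omega), Finset.card_filter]
    rfl

theorem stmt4 (r n k : ℕ) (hr : 0 < r) (hn : 0 < n) (O : PDOrder r n)
    (nv : ℕ → ℕ) (hcomp : ∑ j ∈ Finset.range (k + 1), nv j = n)
    (gam : ColoredSeq r n → ColoredPerm r n) (hgam : ∀ f, isSorted O.lt f (gam f)) :
    (∑ᶠ f ∈ NSet r n k nv,
        (MvPolynomial.X 0 : MvPolynomial (Fin 2) ℤ) ^ lenStat O.lt (gam f) *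
          MvPolynomial.X 1 ^ colf f) *
      ∏ j ∈ Finset.range (k + 1), qfactP (nv j) =
    (∏ i ∈ Finset.Ico (nv 0) n,
        (1 + ∑ j ∈ Finset.Icc 1 (r - 1),
          (MvPolynomial.X 1 : MvPolynomial (Fin 2) ℤ) ^ j * MvPolynomial.X 0 ^ (j + i))) *
      qfactP n := by
  have hinj : Set.InjOn (toSeq : _ → ColoredSeq r n)
      (okset r n k nv : Set ((Fin n → Fin r) × (Fin n → Fin (k + 1)))) := by
    intro q hq q' hq' h
    simp only [okset, Finset.coe_filter, Finset.mem_univ, true_and, Set.mem_ofPred_eq] at hq hq'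
    have h1 : ∀ i, (q.1 i : ℕ) = q'.1 i := fun i => by
      rw [← toSeq_col nv q hq, ← toSeq_col nv q' hq', h]
    have h2 : ∀ i, (q.2 i : ℕ) = q'.2 i := fun i => congrFun (congrArg ColoredSeq.val h) i
    exact Prod.ext (funext fun i => Fin.ext (h1 i)) (funext fun i => Fin.ext (h2 i))
  rw [NSet_eq nv hcomp, finsum_mem_image hinj, finsum_mem_coe_finset, okset, Finset.sum_filter,
    Fintype.sum_prod_type, Finset.sum_mul]
  -- ordering permutation attached to each colouring
  let E : (Fin n → Fin r) → Equiv.Perm (Fin n) := fun κ =>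
    (gam ⟨fun _ => 1, fun i => κ i, fun i => (κ i).2, fun i h => absurd h one_ne_zero⟩).perm
  have hE : ∀ κ : Fin n → Fin r, ∀ i j, i < j →
      O.lt ((E κ i : ℕ) + 1, (κ (E κ i) : ℕ)) ((E κ j : ℕ) + 1, (κ (E κ j) : ℕ)) := by
    intro κ i j hij
    have h := hgam ⟨fun _ => 1, fun i => κ i, fun i => (κ i).2, fun i h => absurd h one_ne_zero⟩
    have h2 := h.2 i j hij
    simp only [lt_irrefl, false_or, true_and, cval, h.1] at h2
    exact h2
  have step : ∀ κ : Fin n → Fin r,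
      (∑ w : Fin n → Fin (k + 1), if okpair k nv κ w then
        PP ^ lenStat O.lt (gam (toSeq (κ, w))) * AA ^ colf (toSeq (κ, w)) else 0) *
        ∏ j ∈ Finset.range (k + 1), qfactP (nv j) =
      (∏ x, (if (κ x : ℕ) = 0 then 1 else AA ^ (κ x : ℕ) * PP ^ ((x : ℕ) + κ x))) *
        (fun s => PP ^ (s * nv 0) * qfall (n - nv 0) s * qfactP (n - s))
          (∑ x, if (κ x : ℕ) = 0 then 0 else 1) := by
    intro κ
    simp only
    rw [← fixed_color O nv hcomp κ (E κ) (hE κ) _ rfl, ← mul_assoc]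
    congr 1
    rw [Finset.mul_sum]
    apply Finset.sum_congr rfl
    intro w _
    split_ifs with hok
    · have hcol := toSeq_col nv (κ, w) hok
      simp only at hcol
      rw [len_eq O (toSeq (κ, w)) _ (hgam _) (E κ) (by simpa only [hcol] using hE κ) w
        (fun i => rfl)]
      simp only [colf, hcol]
      have : (∏ x, (if (κ x : ℕ) = 0 then 1 else AA ^ (κ x : ℕ) * PP ^ ((x : ℕ) + κ x))) =
          AA ^ (∑ x, (κ x : ℕ)) * PP ^ (∑ x, if (κ x : ℕ) = 0 then 0 else (x : ℕ) + κ x) := by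
        rw [← Finset.prod_pow_eq_pow_sum, ← Finset.prod_pow_eq_pow_sum, ← Finset.prod_mul_distrib]
        apply Finset.prod_congr rfl
        intro x _
        split_ifs with h <;> simp [h]
      rw [this, pow_add]
      ring
    · simp
  refine (Finset.sum_congr rfl fun κ _ => step κ).trans ?_
  rw [color_sum r n hr (fun s => PP ^ (s * nv 0) * qfall (n - nv 0) s * qfactP (n - s))]
  have hle : nv 0 ≤ n := by
    rw [← hcomp]
    exact Finset.single_le_sum (f := nv) (fun _ _ => Nat.zero_le _) (Finset.mem_range.mpr (by omega))
  rw [algebra_final n (nv 0) hle]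
  congr 1
  apply Finset.prod_congr rfl
  intro i _
  rw [Finset.sum_mul]
  congr 1
  apply Finset.sum_congr rfl
  intro j _
  rw [pow_add, mul_assoc]
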